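/- arXiv:2409.16026 — 4 statements merged into one kernel-verified Lean document; each statement's English description precedes it below -/
import Mathlib

section
/- For every integer k ≥ 0, every real number a not of the form -j/2 with j a nonnegative integer, and every real z with 0 < z < 1: 2^{k-1}·Φ_HCB(1-k,a,z) = (4^a·z^{2a}) / (2a·C(2a,a)·(1-z²)^{k+1/2}) · ( (2a-1)·√(1-z²)·p_{k-1}(a,z²) + ₂F₁(1/2, a-1/2; a+1/2; z²)·q_{k-1}(z²) ). -/
open Polynomial

/-- The generalized binomial coefficient `C(x,y) = Γ(x+1)/(Γ(y+1) Γ(x-y+1))`. -/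
noncomputable def genBinom (x y : ℝ) : ℝ :=
  Real.Gamma (x + 1) / (Real.Gamma (y + 1) * Real.Gamma (x - y + 1))

/-- The Hurwitz–Lerch type central binomial series
`Φ_HCB(s,a,z) = ∑_{n≥0} (2z)^{2(n+a)} / ( C(2(n+a), n+a) (n+a)^s )`. -/
noncomputable def PhiHCB (s : ℤ) (a z : ℝ) : ℝ :=
  ∑' n : ℕ, (2 * z) ^ (2 * ((n : ℝ) + a)) /
    (genBinom (2 * ((n : ℝ) + a)) ((n : ℝ) + a) * ((n : ℝ) + a) ^ s)

/-- The shifted factorial (Pochhammer symbol) `(α)_n = α(α+1)⋯(α+n-1)`, `(α)_0 = 1`. -/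
def poch (α : ℝ) : ℕ → ℝ
  | 0 => 1
  | n + 1 => poch α n * (α + n)

/-- The Gauss hypergeometric series `₂F₁(α,β;γ;z) = ∑_{n≥0} (α)_n (β)_n / ((γ)_n n!) zⁿ`. -/
noncomputable def Gauss2F1 (α β γ z : ℝ) : ℝ :=
  ∑' n : ℕ, poch α n * poch β n / (poch γ n * (Nat.factorial n : ℝ)) * z ^ n

/-- Lehmer's polynomials `q_k(x)` for `k ≥ -1`, shifted so that `lehmerQ n = q_{n-1}`:
`q_{-1}(x) = 1` and `q_{k+1}(x) = (2(k+1)x+1) q_k(x) + 2x(1-x) q_k'(x)`. -/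
noncomputable def lehmerQ : ℕ → Polynomial ℝ
  | 0 => 1
  | n + 1 => (C (2 * (n : ℝ)) * X + 1) * lehmerQ n + (2 * X * (1 - X)) * derivative (lehmerQ n)

/-- The polynomials `p_k(a,x)` for `k ≥ -1`, shifted so that `lehmerPa a n = p_{n-1}(a,·)`:
`p_{-1}(a,x) = 0` and `p_{k+1}(a,x) = 2((k+1-a)x+a) p_k(a,x) + 2x(1-x) ∂ₓp_k(a,x) + q_k(x)`. -/
noncomputable def lehmerPa (a : ℝ) : ℕ → Polynomial ℝ
  | 0 => 0
  | n + 1 => C 2 * (C ((n : ℝ) - a) * X + C a) * lehmerPa a n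
      + (2 * X * (1 - X)) * derivative (lehmerPa a n) + lehmerQ n

/-!
Put `x = z ^ 2`. By the duplication formula for `Γ`, the coefficients of `Φ_HCB` are those of
`F = ₂F₁(a, 1; a + 1/2; x)`, weighted by `(n + a) ^ (1 - s)`; hence `2 ^ k Φ_HCB(1 - k, a, z)` is,
up to an explicit factor, the value of `D ^ k F`, where `D` is `z d/dz` conjugated by `z ^ (2a)`.
The first-order equation `(1 - x) D F = (2a - 1) + F` gives
`(1 - x) ^ k D ^ k F = (2a - 1) p + F q` by induction on `k`, with `p` and `q` obeying Lehmer's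
recursions. Finally, Euler's transformation turns `F` into
`(1 - x) ^ (-1/2) ₂F₁(1/2, a - 1/2; a + 1/2; x)`. All differentiation takes place in the ring of
formal power series, and analysis enters only through evaluation at `x`.
-/

open scoped PowerSeries Nat

section AbsoluteEvaluation

variable {R : Type*} [NormedCommRing R] {f g : R⟦X⟧} {x v w : R}

/-- The power series `f` converges absolutely at `x`, with sum `v`. Absolute convergence is part of
the notion because it is what makes it stable under products. -/
def HasAbsEval (f : R⟦X⟧) (x v : R) : Prop :=
  (Summable fun n => ‖PowerSeries.coeff n f * x ^ n‖) ∧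
    HasSum (fun n => PowerSeries.coeff n f * x ^ n) v

theorem HasAbsEval.add (hf : HasAbsEval f x v) (hg : HasAbsEval g x w) :
    HasAbsEval (f + g) x (v + w) := by
  simp only [HasAbsEval, map_add, add_mul]
  exact ⟨(hf.1.add hg.1).of_nonneg_of_le (fun _ => norm_nonneg _) fun _ => norm_add_le _ _,
    hf.2.add hg.2⟩

theorem coeff_mul_mul_pow {S : Type*} [CommSemiring S] (f g : S⟦X⟧) (x : S) (n : ℕ) :
    PowerSeries.coeff n (f * g) * x ^ n = ∑ kl ∈ Finset.HasAntidiagonal.antidiagonal n,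
      PowerSeries.coeff kl.1 f * x ^ kl.1 * (PowerSeries.coeff kl.2 g * x ^ kl.2) := by
  rw [PowerSeries.coeff_mul, Finset.sum_mul]
  refine Finset.sum_congr rfl fun kl hkl => ?_
  rw [← Finset.HasAntidiagonal.mem_antidiagonal.1 hkl, pow_add]
  ring

theorem HasAbsEval.mul [CompleteSpace R] (hf : HasAbsEval f x v) (hg : HasAbsEval g x w) :
    HasAbsEval (f * g) x (v * w) := by
  have hs := summable_norm_sum_mul_antidiagonal_of_summable_norm hf.1 hg.1
  have h := tsum_mul_tsum_eq_tsum_sum_antidiagonal_of_summable_norm hf.1 hg.1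
  rw [hf.2.tsum_eq, hg.2.tsum_eq] at h
  simp only [HasAbsEval, coeff_mul_mul_pow]
  exact ⟨hs, h ▸ hs.of_norm.hasSum⟩

theorem hasAbsEval_coe (p : R[X]) (x : R) : HasAbsEval (p : R⟦X⟧) x (p.eval x) := by
  have hzero : ∀ n ∉ p.support, p.coeff n * x ^ n = 0 := fun n hn => by
    rw [notMem_support_iff.1 hn, zero_mul]
  simp only [HasAbsEval, coeff_coe, eval_eq_sum, sum_def]
  exact ⟨summable_of_ne_finset_zero (s := p.support) fun n hn => by rw [hzero n hn, norm_zero],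
    hasSum_sum_of_ne_finset_zero hzero⟩

theorem HasAbsEval.pow [CompleteSpace R] (hf : HasAbsEval f x v) (k : ℕ) :
    HasAbsEval (f ^ k) x (v ^ k) := by
  induction k with
  | zero => simpa using hasAbsEval_coe 1 x
  | succ k ih => simpa only [pow_succ] using ih.mul hf

theorem HasAbsEval.of_mul_one_sub_pow {𝕜 : Type*} [NormedField 𝕜] [CompleteSpace 𝕜] {f : 𝕜⟦X⟧}
    {x v : 𝕜} (hx : ‖x‖ < 1) (k : ℕ) (hf : HasAbsEval (f * (1 - PowerSeries.X) ^ k) x v) :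
    HasAbsEval f x (v / (1 - x) ^ k) := by
  have hgeom : HasAbsEval (PowerSeries.mk 1 : 𝕜⟦X⟧) x (1 - x)⁻¹ := by
    simpa [HasAbsEval] using And.intro (summable_geometric_of_lt_one (norm_nonneg x) hx)
      (hasSum_geometric_of_norm_lt_one hx)
  convert hf.mul (hgeom.pow k) using 1
  · rw [mul_assoc, ← mul_pow, mul_comm (1 - PowerSeries.X), PowerSeries.mk_one_mul_one_sub_eq_one,
      one_pow, mul_one]
  · rw [inv_pow, div_eq_mul_inv]

end AbsoluteEvaluation

section EulerOperator

variable {R : Type*} [CommSemiring R]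

theorem coeff_X_mul_derivative (f : R⟦X⟧) (n : ℕ) :
    PowerSeries.coeff n (PowerSeries.X * d⁄dX R f) = n * PowerSeries.coeff n f := by
  cases n with
  | zero => simp
  | succ n =>
    rw [PowerSeries.coeff_succ_X_mul, PowerSeries.coeff_derivative]
    push_cast
    ring

/-- The Euler operator `z d/dz` conjugated by `z ^ (2 * a)` and written in the variable
`X = z ^ 2`; its iterates lower the exponent `s` in `Φ_HCB(s, a, z)`. -/
noncomputable def twistedEuler (a : R) (f : R⟦X⟧) : R⟦X⟧ :=
  2 * (PowerSeries.X * d⁄dX R f + PowerSeries.C a * f)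

theorem coeff_twistedEuler (a : R) (f : R⟦X⟧) (n : ℕ) :
    PowerSeries.coeff n (twistedEuler a f) = 2 * (n + a) * PowerSeries.coeff n f := by
  rw [twistedEuler, two_mul, map_add, map_add, coeff_X_mul_derivative, PowerSeries.coeff_C_mul]
  ring

theorem coeff_iterate_twistedEuler (a : R) (f : R⟦X⟧) (k n : ℕ) :
    PowerSeries.coeff n ((twistedEuler a)^[k] f) = (2 * (n + a)) ^ k * PowerSeries.coeff n f := by
  induction k with
  | zero => simp
  | succ k ih => rw [Function.iterate_succ_apply', coeff_twistedEuler, ih, pow_succ']; ring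

theorem one_sub_X_mul_derivative_one_sub_X_pow {S : Type*} [CommRing S] (k : ℕ) :
    (1 - PowerSeries.X : S⟦X⟧) * d⁄dX S ((1 - PowerSeries.X) ^ k) =
      -(k : S⟦X⟧) * (1 - PowerSeries.X) ^ k := by
  cases k with
  | zero => simp
  | succ k =>
    rw [PowerSeries.derivative_pow, map_sub, PowerSeries.derivative_one, PowerSeries.derivative_X,
      Nat.add_sub_cancel]
    ring

theorem twistedEuler_mul_one_sub_pow_succ {S : Type*} [CommRing S] (a : S) (f : S⟦X⟧) (k : ℕ) :
    twistedEuler a f * (1 - PowerSeries.X) ^ (k + 1) =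
      2 * (PowerSeries.X * (1 - PowerSeries.X) * d⁄dX S (f * (1 - PowerSeries.X) ^ k) +
        (PowerSeries.C a * (1 - PowerSeries.X) + (k : S⟦X⟧) * PowerSeries.X) *
          (f * (1 - PowerSeries.X) ^ k)) := by
  rw [twistedEuler, Derivation.leibniz, smul_eq_mul, smul_eq_mul]
  linear_combination -2 * PowerSeries.X * f * one_sub_X_mul_derivative_one_sub_X_pow (S := S) k

/-- Lehmer's recursions are exactly what applying `twistedEuler a` does to the polynomial
coefficients of `1` and `F`. -/
theorem iterate_twistedEuler_mul_one_sub_pow {a : ℝ} {F : ℝ⟦X⟧}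
    (hF : (1 - PowerSeries.X) * twistedEuler a F = PowerSeries.C (2 * a - 1) + F) (k : ℕ) :
    (twistedEuler a)^[k] F * (1 - PowerSeries.X) ^ k =
      PowerSeries.C (2 * a - 1) * (lehmerPa a k : ℝ⟦X⟧) + F * (lehmerQ k : ℝ⟦X⟧) := by
  induction k with
  | zero => simp [lehmerPa, lehmerQ]
  | succ k ih =>
    have hc2 : ((2 : ℝ[X]) : ℝ⟦X⟧) = 2 := map_ofNat coeToPowerSeries.ringHom 2
    have hck : ((k : ℝ[X]) : ℝ⟦X⟧) = k := map_natCast coeToPowerSeries.ringHom k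
    rw [Function.iterate_succ_apply', twistedEuler_mul_one_sub_pow_succ, ih]
    rw [twistedEuler] at hF
    simp only [map_add (d⁄dX ℝ), Derivation.leibniz, smul_eq_mul, PowerSeries.derivative_C,
      PowerSeries.derivative_coe]
    simp only [lehmerPa, lehmerQ, coe_add, coe_mul, coe_sub, coe_C, coe_X, coe_one, hc2, hck,
      map_sub, map_mul, map_ofNat, map_natCast, map_one] at hF ⊢
    linear_combination (lehmerQ k : ℝ⟦X⟧) * hF

end EulerOperator

section GaussOperator

variable {R : Type*} [CommRing R]

/-- Gauss's hypergeometric differential operator, whose kernel over a field of characteristic zero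
is spanned by `₂F₁(α, β; γ; X)` when `γ` is not a nonpositive integer. -/
noncomputable def gaussOperator (α β γ : R) (f : R⟦X⟧) : R⟦X⟧ :=
  PowerSeries.X * (1 - PowerSeries.X) * d⁄dX R (d⁄dX R f) +
    (PowerSeries.C γ - PowerSeries.C (α + β + 1) * PowerSeries.X) * d⁄dX R f -
    PowerSeries.C (α * β) * f

theorem coeff_gaussOperator (α β γ : R) (f : R⟦X⟧) (n : ℕ) :
    PowerSeries.coeff n (gaussOperator α β γ f) =
      (n + 1) * (γ + n) * PowerSeries.coeff (n + 1) f -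
        (α + n) * (β + n) * PowerSeries.coeff n f := by
  have hθ : gaussOperator α β γ f = PowerSeries.X * d⁄dX R (d⁄dX R f) +
      PowerSeries.C γ * d⁄dX R f -
      (PowerSeries.X * d⁄dX R (PowerSeries.X * d⁄dX R f) +
        PowerSeries.C (α + β) * (PowerSeries.X * d⁄dX R f) + PowerSeries.C (α * β) * f) := by
    simp only [gaussOperator, Derivation.leibniz, smul_eq_mul, PowerSeries.derivative_X, map_add,
      map_one]
    ring
  rw [hθ]
  simp only [map_add (PowerSeries.coeff n), map_sub (PowerSeries.coeff n), coeff_X_mul_derivative,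
    PowerSeries.coeff_C_mul, PowerSeries.coeff_derivative]
  ring

theorem gaussOperator_mul_of_one_sub_X_mul_derivative {α β γ : R} {B : R⟦X⟧}
    (hB : (1 - PowerSeries.X) * d⁄dX R B = PowerSeries.C (α + β - γ) * B) (g : R⟦X⟧) :
    gaussOperator α β γ (B * g) = B * gaussOperator (γ - α) (γ - β) γ g := by
  have hB' := congrArg (d⁄dX R) hB
  simp only [Derivation.leibniz, smul_eq_mul, map_sub, map_add, PowerSeries.derivative_one,
    PowerSeries.derivative_X, PowerSeries.derivative_C] at hB'
  simp only [gaussOperator, Derivation.leibniz, smul_eq_mul, map_add, map_sub, map_mul,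
    map_one] at hB ⊢
  linear_combination PowerSeries.X * g * hB' +
    (PowerSeries.C γ * g + 2 * PowerSeries.X * d⁄dX R g) * hB

end GaussOperator

section FormalHypergeometricSeries

variable {K : Type*} [Field K]

/-- The formal power series `₂F₁(α, β; γ; X)`, so that differential equations for `₂F₁` become
identities of power series. -/
noncomputable def hypergeometricSeries (α β γ : K) : K⟦X⟧ :=
  PowerSeries.mk (ordinaryHypergeometricCoefficient α β γ)

theorem coeff_hypergeometricSeries (α β γ : K) (n : ℕ) :
    PowerSeries.coeff n (hypergeometricSeries α β γ) =
      (n ! : K)⁻¹ * (ascPochhammer K n).eval α * (ascPochhammer K n).eval β *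
        ((ascPochhammer K n).eval γ)⁻¹ :=
  PowerSeries.coeff_mk _ _

theorem constantCoeff_hypergeometricSeries (α β γ : K) :
    PowerSeries.constantCoeff (hypergeometricSeries α β γ) = 1 := by
  simp [← PowerSeries.coeff_zero_eq_constantCoeff_apply, coeff_hypergeometricSeries]

variable [CharZero K]

theorem coeff_hypergeometricSeries_one (α γ : K) (n : ℕ) :
    PowerSeries.coeff n (hypergeometricSeries α 1 γ) =
      (ascPochhammer K n).eval α / (ascPochhammer K n).eval γ := by
  have hn : (n ! : K) ≠ 0 := Nat.cast_ne_zero.2 n.factorial_ne_zero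
  rw [coeff_hypergeometricSeries, ascPochhammer_eval_one]
  field_simp

theorem coeff_succ_hypergeometricSeries (α β : K) {γ : K} (hγ : ∀ n : ℕ, γ + n ≠ 0) (n : ℕ) :
    (n + 1) * (γ + n) * PowerSeries.coeff (n + 1) (hypergeometricSeries α β γ) =
      (α + n) * (β + n) * PowerSeries.coeff n (hypergeometricSeries α β γ) := by
  have hn : (n : K) + 1 ≠ 0 := n.cast_add_one_ne_zero
  have hγn := hγ n
  simp only [coeff_hypergeometricSeries, ascPochhammer_succ_eval, Nat.factorial_succ, Nat.cast_mul,
    Nat.cast_add_one, mul_inv]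
  field_simp

theorem gaussOperator_hypergeometricSeries (α β : K) {γ : K} (hγ : ∀ n : ℕ, γ + n ≠ 0) :
    gaussOperator α β γ (hypergeometricSeries α β γ) = 0 := by
  ext n
  rw [coeff_gaussOperator, coeff_succ_hypergeometricSeries α β hγ, sub_self, map_zero]

theorem eq_hypergeometricSeries_of_gaussOperator_eq_zero {α β γ : K} (hγ : ∀ n : ℕ, γ + n ≠ 0)
    {f : K⟦X⟧} (hf : gaussOperator α β γ f = 0) (hf0 : PowerSeries.constantCoeff f = 1) :
    f = hypergeometricSeries α β γ := by
  ext n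
  induction n with
  | zero => simp only [PowerSeries.coeff_zero_eq_constantCoeff_apply, hf0,
      constantCoeff_hypergeometricSeries]
  | succ n ih =>
    have hn : ((n : K) + 1) * (γ + n) ≠ 0 := mul_ne_zero n.cast_add_one_ne_zero (hγ n)
    have hcoeff := coeff_gaussOperator α β γ f n
    rw [hf, map_zero, eq_comm, sub_eq_zero] at hcoeff
    rw [← mul_right_inj' hn, hcoeff, coeff_succ_hypergeometricSeries α β hγ, ih]

theorem one_sub_X_mul_X_mul_derivative_hypergeometricSeries_one (α : K) {γ : K}
    (hγ : ∀ n : ℕ, γ + n ≠ 0) :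
    (1 - PowerSeries.X) * (PowerSeries.X * d⁄dX K (hypergeometricSeries α 1 γ) +
        PowerSeries.C α * hypergeometricSeries α 1 γ) =
      PowerSeries.C (γ - 1) + PowerSeries.C (α + 1 - γ) * hypergeometricSeries α 1 γ := by
  rw [sub_mul, one_mul]
  ext n
  cases n with
  | zero => simp [constantCoeff_hypergeometricSeries]
  | succ n =>
    have hrec := coeff_succ_hypergeometricSeries α 1 hγ n
    simp only [map_add (PowerSeries.coeff _), map_sub (PowerSeries.coeff _), coeff_X_mul_derivative,
      PowerSeries.coeff_C_mul, PowerSeries.coeff_succ_X_mul, PowerSeries.coeff_derivative,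
      PowerSeries.coeff_C, n.succ_ne_zero, if_false]
    apply mul_left_cancel₀ (n.cast_add_one_ne_zero : (n : K) + 1 ≠ 0)
    linear_combination hrec

theorem one_sub_X_mul_derivative_hypergeometricSeries_one_one (α : K) :
    (1 - PowerSeries.X) * d⁄dX K (hypergeometricSeries α 1 1) =
      PowerSeries.C α * hypergeometricSeries α 1 1 := by
  have h := one_sub_X_mul_X_mul_derivative_hypergeometricSeries_one α (γ := (1 : K)) fun n => by
    rw [add_comm]; exact n.cast_add_one_ne_zero
  rw [sub_self, map_zero, add_sub_cancel_right] at h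
  apply mul_left_cancel₀ (PowerSeries.X_ne_zero (R := K))
  linear_combination h

/-- **Euler's transformation**; the first factor on the right is the binomial series of
`(1 - X) ^ (γ - α - β)`. -/
theorem hypergeometricSeries_eq_mul (α β : K) {γ : K} (hγ : ∀ n : ℕ, γ + n ≠ 0) :
    hypergeometricSeries α β γ =
      hypergeometricSeries (α + β - γ) 1 1 * hypergeometricSeries (γ - α) (γ - β) γ := by
  refine (eq_hypergeometricSeries_of_gaussOperator_eq_zero hγ ?_ ?_).symm
  · rw [gaussOperator_mul_of_one_sub_X_mul_derivative
      (one_sub_X_mul_derivative_hypergeometricSeries_one_one _),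
      gaussOperator_hypergeometricSeries _ _ hγ, mul_zero]
  · rw [map_mul, constantCoeff_hypergeometricSeries, constantCoeff_hypergeometricSeries, one_mul]

theorem one_sub_X_mul_twistedEuler_hypergeometricSeries {a : K} (ha : ∀ n : ℕ, a + 1 / 2 + n ≠ 0) :
    (1 - PowerSeries.X) * twistedEuler a (hypergeometricSeries a 1 (a + 1 / 2)) =
      PowerSeries.C (2 * a - 1) + hypergeometricSeries a 1 (a + 1 / 2) := by
  have h := one_sub_X_mul_X_mul_derivative_hypergeometricSeries_one a ha
  have hhalf : 2 * PowerSeries.C (1 / 2 : K) = 1 := by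
    rw [← map_ofNat PowerSeries.C 2, ← map_mul]; simp
  rw [twistedEuler]
  simp only [map_add, map_sub, map_mul, map_ofNat, map_one] at h ⊢
  linear_combination 2 * h + (1 - hypergeometricSeries a 1 (a + 1 / 2)) * hhalf

end FormalHypergeometricSeries

section ConvergentHypergeometricSeries

variable {𝕜 : Type*} [RCLike 𝕜]

theorem one_le_radius_ordinaryHypergeometricSeries (α β γ : 𝕜) :
    1 ≤ (ordinaryHypergeometricSeries 𝕜 α β γ).radius := by
  by_cases h : ∀ n : ℕ, (n : 𝕜) ≠ -α ∧ (n : 𝕜) ≠ -β ∧ (n : 𝕜) ≠ -γ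
  · exact (ordinaryHypergeometricSeries_radius_eq_one 𝕜 α β γ h).ge
  · have hdeg : ∃ n : ℕ, α = -n ∨ β = -n ∨ γ = -n := by
      simpa only [not_forall, not_and_or, not_not, eq_neg_iff_add_eq_zero, add_comm] using h
    obtain ⟨n, rfl | rfl | rfl⟩ := hdeg
    · simp [ordinaryHypergeometric_radius_top_of_neg_nat₁]
    · simp [ordinaryHypergeometric_radius_top_of_neg_nat₂]
    · simp [ordinaryHypergeometric_radius_top_of_neg_nat₃]

theorem hasAbsEval_hypergeometricSeries (α β γ : 𝕜) {x : 𝕜} (hx : ‖x‖ < 1) :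
    HasAbsEval (hypergeometricSeries α β γ) x (₂F₁ α β γ x) := by
  have hball : x ∈ Metric.eball (0 : 𝕜) (ordinaryHypergeometricSeries 𝕜 α β γ).radius := by
    refine Metric.eball_subset_eball (one_le_radius_ordinaryHypergeometricSeries α β γ) ?_
    simpa [enorm_eq_nnnorm] using! hx
  have hterm : ∀ n, PowerSeries.coeff n (hypergeometricSeries α β γ) * x ^ n =
      ordinaryHypergeometricSeries 𝕜 α β γ n fun _ => x := fun n => by
    rw [ordinaryHypergeometricSeries_apply_eq, coeff_hypergeometricSeries, smul_eq_mul]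
  simp only [HasAbsEval, hterm]
  exact ⟨FormalMultilinearSeries.summable_norm_apply _ hball,
    FormalMultilinearSeries.hasSum _ hball⟩

theorem ordinaryHypergeometric_one_one (α : ℝ) {x : ℝ} (hx : |x| < 1) :
    ₂F₁ α 1 1 x = (1 - x) ^ (-α) := by
  have hx' : -x ∈ Metric.eball (0 : ℝ) 1 := by simpa [enorm_eq_nnnorm] using! hx
  have hsum : (1 + -x) ^ (-α) =
      ((ordinaryHypergeometricSeries ℝ α 1 1).compContinuousLinearMap (-.id ℝ ℝ)).sum (-x) := by
    have h := Real.one_add_rpow_hasFPowerSeriesOnBall_zero (a := -α).sum hx'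
    rwa [binomialSeries_eq_ordinaryHypergeometricSeries (b := (1 : ℝ)) (by norm_cast; simp),
      zero_add, neg_neg] at h
  rw [sub_eq_add_neg, hsum, ordinaryHypergeometric, FormalMultilinearSeries.sum,
    FormalMultilinearSeries.sum]
  refine tsum_congr fun n => ?_
  rw [FormalMultilinearSeries.compContinuousLinearMap_apply]
  congr 1
  ext
  simp

theorem poch_eq_ascPochhammer_eval (α : ℝ) (n : ℕ) : poch α n = (ascPochhammer ℝ n).eval α := by
  induction n with
  | zero => simp [poch]
  | succ n ih => rw [poch, ih, ascPochhammer_succ_eval]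

theorem gauss2F1_eq_ordinaryHypergeometric (α β γ x : ℝ) : Gauss2F1 α β γ x = ₂F₁ α β γ x := by
  rw [Gauss2F1, ordinaryHypergeometric_eq_tsum]
  refine tsum_congr fun n => ?_
  simp only [poch_eq_ascPochhammer_eval, smul_eq_mul]
  ring

end ConvergentHypergeometricSeries

section CentralBinomialCoefficients

theorem Gamma_add_natCast {s : ℝ} (hs : ∀ n : ℕ, s + n ≠ 0) (n : ℕ) :
    Real.Gamma (s + n) = (ascPochhammer ℝ n).eval s * Real.Gamma s := by
  induction n with
  | zero => simp
  | succ n ih =>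
    rw [Nat.cast_add_one, ← add_assoc, Real.Gamma_add_one (hs n), ih, ascPochhammer_succ_eval]
    ring

/-- This is the duplication formula for `Γ`. -/
theorem genBinom_two_mul_self (b : ℝ) :
    genBinom (2 * b) b = 4 ^ b * Real.Gamma (b + 1 / 2) / (√Real.pi * Real.Gamma (b + 1)) := by
  have hdup := Real.Gamma_mul_Gamma_add_half (b + 1 / 2)
  have h4 : (4 : ℝ) ^ b * 2 ^ (1 - (2 * b + 1)) = 1 := by
    rw [show (4 : ℝ) = 2 ^ (2 : ℝ) by norm_num, ← Real.rpow_mul two_pos.le,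
      ← Real.rpow_add two_pos, show 2 * b + (1 - (2 * b + 1)) = 0 by ring, Real.rpow_zero]
  rw [show b + 1 / 2 + 1 / 2 = b + 1 by ring, show 2 * (b + 1 / 2) = 2 * b + 1 by ring] at hdup
  rw [genBinom, show 2 * b - b + 1 = b + 1 by ring]
  by_cases hΓ : Real.Gamma (b + 1) = 0
  · simp [hΓ]
  · have hπ : √Real.pi ≠ 0 := (Real.sqrt_pos.2 Real.pi_pos).ne'
    rw [div_eq_div_iff (mul_ne_zero hΓ hΓ) (mul_ne_zero hπ hΓ)]
    linear_combination (-4 ^ b) * Real.Gamma (b + 1) * hdup -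
      Real.Gamma (2 * b + 1) * √Real.pi * Real.Gamma (b + 1) * h4

theorem four_rpow_div_mul_genBinom {b : ℝ} (hb : b ≠ 0) :
    4 ^ b / (b * genBinom (2 * b) b) = √Real.pi * (Real.Gamma b / Real.Gamma (b + 1 / 2)) := by
  have h4 : (4 : ℝ) ^ b ≠ 0 := (Real.rpow_pos_of_pos four_pos b).ne'
  rw [genBinom_two_mul_self, Real.Gamma_add_one hb]
  field_simp

theorem four_rpow_natCast_add_div_mul_genBinom {a : ℝ} (ha : ∀ n : ℕ, a + n ≠ 0)
    (ha' : ∀ n : ℕ, a + 1 / 2 + n ≠ 0) (n : ℕ) :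
    4 ^ (n + a) / ((n + a) * genBinom (2 * (n + a)) (n + a)) =
      4 ^ a / (a * genBinom (2 * a) a) *
        PowerSeries.coeff n (hypergeometricSeries a 1 (a + 1 / 2)) := by
  have ha0 : a ≠ 0 := by simpa using ha 0
  rw [add_comm (n : ℝ), four_rpow_div_mul_genBinom (ha n), four_rpow_div_mul_genBinom ha0,
    coeff_hypergeometricSeries_one, add_right_comm, Gamma_add_natCast ha, Gamma_add_natCast ha',
    mul_div_mul_comm]
  ring

end CentralBinomialCoefficients

section HurwitzLerchCentralBinomialSeries

theorem add_natCast_ne_zero {a : ℝ} (ha : ∀ j : ℕ, a ≠ -(j : ℝ) / 2) (n : ℕ) : a + n ≠ 0 := by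
  intro h
  apply ha (2 * n)
  push_cast
  linarith

theorem add_half_add_natCast_ne_zero {a : ℝ} (ha : ∀ j : ℕ, a ≠ -(j : ℝ) / 2) (n : ℕ) :
    a + 1 / 2 + n ≠ 0 := by
  intro h
  apply ha (2 * n + 1)
  push_cast
  linarith

theorem two_mul_rpow_two_mul_natCast_add {z : ℝ} (hz : 0 < z) (a : ℝ) (n : ℕ) :
    (2 * z) ^ (2 * (n + a)) = 4 ^ (n + a) * (z ^ (2 * a) * (z ^ 2) ^ n) := by
  rw [Real.mul_rpow two_pos.le hz.le, Real.rpow_mul two_pos.le, mul_add, Real.rpow_add hz,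
    Real.rpow_mul hz.le, Real.rpow_natCast, Real.rpow_two, Real.rpow_two, mul_comm (_ ^ n)]
  norm_num

theorem two_pow_mul_PhiHCB (k : ℕ) {a : ℝ} (ha : ∀ j : ℕ, a ≠ -(j : ℝ) / 2) {z : ℝ} (hz : 0 < z) :
    2 ^ k * PhiHCB (1 - k) a z = 4 ^ a * z ^ (2 * a) / (a * genBinom (2 * a) a) *
      ∑' n, PowerSeries.coeff n ((twistedEuler a)^[k] (hypergeometricSeries a 1 (a + 1 / 2))) *
        (z ^ 2) ^ n := by
  rw [PhiHCB, ← tsum_mul_left, ← tsum_mul_left]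
  refine tsum_congr fun n => ?_
  have hn : (n : ℝ) + a ≠ 0 := add_comm a n ▸ add_natCast_ne_zero ha n
  have hcoeff := four_rpow_natCast_add_div_mul_genBinom (add_natCast_ne_zero ha)
    (add_half_add_natCast_ne_zero ha) n
  rw [coeff_iterate_twistedEuler, two_mul_rpow_two_mul_natCast_add hz, zpow_sub₀ hn, zpow_one,
    zpow_natCast]
  calc 2 ^ k * (4 ^ (n + a) * (z ^ (2 * a) * (z ^ 2) ^ n) /
        (genBinom (2 * (n + a)) (n + a) * ((n + a) / (n + a) ^ k)))
      = 4 ^ (n + a) / ((n + a) * genBinom (2 * (n + a)) (n + a)) *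
          (z ^ (2 * a) * (z ^ 2) ^ n * (2 * (n + a)) ^ k) := by
        rw [mul_pow]
        field_simp
    _ = 4 ^ a * z ^ (2 * a) / (a * genBinom (2 * a) a) * ((2 * (n + a)) ^ k *
          PowerSeries.coeff n (hypergeometricSeries a 1 (a + 1 / 2)) * (z ^ 2) ^ n) := by
        rw [hcoeff]
        ring

theorem hasAbsEval_iterate_twistedEuler_hypergeometricSeries (k : ℕ) {a : ℝ}
    (ha : ∀ n : ℕ, a + 1 / 2 + n ≠ 0) {x : ℝ} (hx : |x| < 1) :
    HasAbsEval ((twistedEuler a)^[k] (hypergeometricSeries a 1 (a + 1 / 2))) x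
      (((2 * a - 1) * (lehmerPa a k).eval x + (1 - x) ^ (-(1 / 2) : ℝ) *
        ₂F₁ (1 / 2) (a - 1 / 2) (a + 1 / 2) x * (lehmerQ k).eval x) / (1 - x) ^ k) := by
  refine HasAbsEval.of_mul_one_sub_pow hx k ?_
  have heuler := hypergeometricSeries_eq_mul a 1 ha
  rw [show a + 1 - (a + 1 / 2) = 1 / 2 by ring, show a + 1 / 2 - a = 1 / 2 by ring,
    show a + 1 / 2 - 1 = a - 1 / 2 by ring] at heuler
  rw [iterate_twistedEuler_mul_one_sub_pow (one_sub_X_mul_twistedEuler_hypergeometricSeries ha),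
    heuler, ← ordinaryHypergeometric_one_one _ hx, ← coe_C]
  have hconst := hasAbsEval_coe (C (2 * a - 1)) x
  rw [eval_C] at hconst
  exact (hconst.mul (hasAbsEval_coe _ x)).add
    (((hasAbsEval_hypergeometricSeries _ _ _ hx).mul (hasAbsEval_hypergeometricSeries _ _ _ hx)).mul
      (hasAbsEval_coe _ x))

end HurwitzLerchCentralBinomialSeries

/-- For every integer `k ≥ 0`, real `a` not of the form `-j/2` (`j ∈ ℤ_{≥0}`), and `0 < z < 1`:
`2^{k-1} Φ_HCB(1-k,a,z) = (4^a z^{2a})/(2a C(2a,a) (1-z²)^{k+1/2})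
  ⬝ ( (2a-1) √(1-z²) p_{k-1}(a,z²) + ₂F₁(1/2, a-1/2; a+1/2; z²) q_{k-1}(z²) )`. -/
theorem phiHCB_nonpos_values (k : ℕ) (a : ℝ) (ha : ∀ j : ℕ, a ≠ -(j : ℝ) / 2)
    (z : ℝ) (hz0 : 0 < z) (hz1 : z < 1) :
    (2 : ℝ) ^ ((k : ℤ) - 1) * PhiHCB (1 - k) a z =
      (4 : ℝ) ^ a * z ^ (2 * a) /
          (2 * a * genBinom (2 * a) a * (1 - z ^ 2) ^ ((k : ℝ) + 1 / 2)) *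
        ((2 * a - 1) * Real.sqrt (1 - z ^ 2) * (lehmerPa a k).eval (z ^ 2) +
          Gauss2F1 (1 / 2) (a - 1 / 2) (a + 1 / 2) (z ^ 2) * (lehmerQ k).eval (z ^ 2)) := by
  have hx : |z ^ 2| < 1 := by
    rw [abs_of_nonneg (sq_nonneg z)]
    exact pow_lt_one₀ hz0.le hz1 two_ne_zero
  have hy : 0 < 1 - z ^ 2 := sub_pos.2 (lt_of_abs_lt hx)
  have heval := hasAbsEval_iterate_twistedEuler_hypergeometricSeries k
    (add_half_add_natCast_ne_zero ha) hx
  rw [zpow_sub₀ two_ne_zero, zpow_natCast, zpow_one, div_mul_eq_mul_div,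
    two_pow_mul_PhiHCB k ha hz0, heval.2.tsum_eq,
    gauss2F1_eq_ordinaryHypergeometric, Real.rpow_add hy, Real.rpow_natCast, Real.rpow_neg hy.le,
    ← Real.sqrt_eq_rpow]
  have hs : √(1 - z ^ 2) ≠ 0 := (Real.sqrt_pos.2 hy).ne'
  field_simp
end

section
/- For every integer n ≥ 0, every real number a not of the form (1-j)/2 with j a nonnegative integer, and every real z with |z| < 1: p_n(a,z) = 2^n · Σ_{j=0}^n Σ_{l=0}^j C(n+1, j+1)·C(j,l)·(a-1)^{j-l}·(1-z)^{j-l}·E_{n-j}(z,1/2)·E_l(z,1/2). -/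
open Polynomial

/-!
Let `Q = ∑ qₙ₋₁(x) tⁿ/n!` and `P = ∑ pₙ₋₁(a,x) tⁿ/n!`, and let `D` be the derivation
`(1 - 2xt) ∂_t - 2x(1 - x) ∂_x`. The recursions say that `D Q = Q` and `D P = 2a(1 - x) P + Q`, and
a solution of `D f = c f + r` is determined by its constant term in `t`. Checking derivatives and
constant terms therefore gives `Q² (exp (2t(x - 1)) - x) = 1 - x` and
`P = Q ∫₀ᵗ exp (2(a - 1)(1 - x)s) Q(x, s) ds`. The first identity shows that
`qₙ₋₁(z) = 2ⁿ Eₙ(z, 1/2)`, the sign of the square root being fixed by the value at `t = 0`; the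
coefficients of the second are then the asserted double sum.
-/

open Filter
open scoped ContDiff Nat PowerSeries Topology

section ExponentialGeneratingFunctions

variable {A : Type*} [CommRing A] [Algebra ℚ A]

/-- The exponential generating function `∑ u n tⁿ / n!` of a sequence. -/
noncomputable def egf : (ℕ → A) →+ A⟦X⟧ where
  toFun u := PowerSeries.mk fun n => (n ! : ℚ)⁻¹ • u n
  map_zero' := by ext; simp
  map_add' u v := by ext; simp

theorem coeff_egf (u : ℕ → A) (n : ℕ) : PowerSeries.coeff n (egf u) = (n ! : ℚ)⁻¹ • u n := by
  simp [egf]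

theorem constantCoeff_egf (u : ℕ → A) : PowerSeries.constantCoeff (egf u) = u 0 := by
  simp [← PowerSeries.coeff_zero_eq_constantCoeff_apply, coeff_egf]

theorem egf_injective : Function.Injective (egf : (ℕ → A) →+ A⟦X⟧) := by
  intro u v h
  ext n
  have hn := congrArg (PowerSeries.coeff n) h
  rw [coeff_egf, coeff_egf] at hn
  exact smul_right_injective A (inv_ne_zero (by positivity : (n ! : ℚ) ≠ 0)) hn

theorem egf_surjective : Function.Surjective (egf : (ℕ → A) →+ A⟦X⟧) := by
  refine fun f => ⟨fun n => (n ! : ℚ) • PowerSeries.coeff n f, ?_⟩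
  ext n
  rw [coeff_egf, inv_smul_smul₀ (by positivity)]

theorem egf_single_zero (c : A) : egf (Pi.single 0 c) = PowerSeries.C c := by
  ext n
  rw [coeff_egf, PowerSeries.coeff_C, Pi.single_apply]
  split_ifs with hn <;> simp [hn]

theorem C_mul_egf (c : A) (u : ℕ → A) : PowerSeries.C c * egf u = egf (c • u) := by
  ext n
  rw [PowerSeries.coeff_C_mul, coeff_egf, coeff_egf, mul_smul_comm, Pi.smul_apply, smul_eq_mul]

theorem derivative_egf (u : ℕ → A) : d⁄dX A (egf u) = egf fun n => u (n + 1) := by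
  ext n
  have hn : ((n + 1)! : ℚ)⁻¹ * (n + 1 : ℕ) = (n ! : ℚ)⁻¹ := by
    rw [Nat.factorial_succ]
    push_cast
    field_simp
  rw [PowerSeries.coeff_derivative, coeff_egf, coeff_egf, ← hn, mul_smul, Nat.cast_smul_eq_nsmul,
    nsmul_eq_mul, smul_mul_assoc, mul_comm, Nat.cast_succ]

theorem X_mul_derivative_egf (u : ℕ → A) :
    PowerSeries.X * d⁄dX A (egf u) = egf fun n => n * u n := by
  ext n
  cases n with
  | zero => simp [coeff_egf]
  | succ n =>
    rw [PowerSeries.coeff_succ_X_mul, PowerSeries.coeff_derivative, coeff_egf, coeff_egf,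
      smul_mul_assoc, mul_comm, Nat.cast_succ]

/-- The sequence whose exponential generating function is the product of those of `u` and `v`. -/
def binomialConv (u v : ℕ → A) (n : ℕ) : A :=
  ∑ k ∈ Finset.range (n + 1), n.choose k * u k * v (n - k)

theorem egf_mul (u v : ℕ → A) : egf u * egf v = egf (binomialConv u v) := by
  ext n
  rw [PowerSeries.coeff_mul, Finset.Nat.sum_antidiagonal_eq_sum_range_succ_mk, coeff_egf,
    binomialConv, Finset.smul_sum]
  refine Finset.sum_congr rfl fun k hk => ?_
  have hkn : k ≤ n := Finset.mem_range_succ_iff.mp hk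
  have hchoose : (n ! : ℚ)⁻¹ * n.choose k = (k ! : ℚ)⁻¹ * ((n - k)! : ℚ)⁻¹ := by
    rw [Nat.cast_choose ℚ hkn]
    field_simp
  rw [coeff_egf, coeff_egf, smul_mul_smul_comm, ← hchoose, mul_smul, Nat.cast_smul_eq_nsmul,
    nsmul_eq_mul, mul_assoc]

theorem map_egf {B : Type*} [CommRing B] [Algebra ℚ B] (f : A →+* B) (u : ℕ → A) :
    PowerSeries.map f (egf u) = egf (f ∘ u) := by
  ext n
  rw [PowerSeries.coeff_map, coeff_egf, coeff_egf, map_rat_smul, Function.comp_apply]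

end ExponentialGeneratingFunctions

section CoeffDerivation

variable {R A : Type*} [CommRing R] [CommRing A] [Algebra R A]

/-- The extension of a derivation of `A` to `A⟦X⟧` that acts on each coefficient. -/
noncomputable def coeffDerivation (d : Derivation R A A) : Derivation R A⟦X⟧ A⟦X⟧ :=
  Derivation.mk'
    { toFun := fun f => PowerSeries.mk fun n => d (PowerSeries.coeff n f)
      map_add' := fun f g => by ext; simp
      map_smul' := fun r f => by ext; simp }
    fun f g => by
      ext n
      simp only [LinearMap.coe_mk, AddHom.coe_mk, PowerSeries.coeff_mk, PowerSeries.coeff_mul,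
        smul_eq_mul, map_add, map_sum, Derivation.leibniz, Finset.sum_add_distrib]
      rw [← Finset.Nat.sum_antidiagonal_swap (f := fun p => PowerSeries.coeff p.1 g * _)]
      rfl

theorem coeff_coeffDerivation (d : Derivation R A A) (f : A⟦X⟧) (n : ℕ) :
    PowerSeries.coeff n (coeffDerivation d f) = d (PowerSeries.coeff n f) := by
  simp [coeffDerivation]

theorem coeffDerivation_egf [Algebra ℚ A] (d : Derivation R A A) (u : ℕ → A) :
    coeffDerivation d (egf u) = egf (d ∘ u) := by
  ext n
  rw [coeff_coeffDerivation, coeff_egf, coeff_egf, map_rat_smul, Function.comp_apply]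

end CoeffDerivation

section EgfDerivation

variable {R A : Type*} [CommRing R] [CommRing A] [Algebra R A]

/-- The derivation `(1 + b t) ∂_t + d` of `A⟦t⟧`, where the derivation `d` of `A` acts on the
coefficients. It turns a recursion `u (n + 1) = (c - n b) u n - d (u n) + r n` into a linear
equation between exponential generating functions. -/
noncomputable def egfDerivation (d : Derivation R A A) (b : A) : Derivation R A⟦X⟧ A⟦X⟧ :=
  (1 + PowerSeries.C b * PowerSeries.X) • (d⁄dX A).restrictScalars R + coeffDerivation d

variable [Algebra ℚ A] (d : Derivation R A A) (b : A)

theorem egfDerivation_egf (u : ℕ → A) :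
    egfDerivation d b (egf u) = egf fun n => u (n + 1) + n * b * u n + d (u n) := by
  have h : egfDerivation d b (egf u) = d⁄dX A (egf u)
      + PowerSeries.C b * (PowerSeries.X * d⁄dX A (egf u)) + coeffDerivation d (egf u) := by
    rw [egfDerivation, Derivation.add_apply, Derivation.smul_apply,
      Derivation.restrictScalars_apply, smul_eq_mul]
    ring
  rw [h, X_mul_derivative_egf, derivative_egf, coeffDerivation_egf, C_mul_egf, ← map_add,
    ← map_add]
  congr 1
  ext1 n
  simp only [Pi.add_apply, Pi.smul_apply, smul_eq_mul, Function.comp_apply]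
  ring

theorem egfDerivation_C (c : A) :
    egfDerivation d b (PowerSeries.C c) = PowerSeries.C (d c) := by
  rw [← egf_single_zero, ← egf_single_zero, egfDerivation_egf]
  congr 1
  ext1 n
  cases n <;> simp

theorem egfDerivation_egf_eq_iff {u r : ℕ → A} {c : A} :
    egfDerivation d b (egf u) = PowerSeries.C c * egf u + egf r ↔
      ∀ n, u (n + 1) = (c - n * b) * u n - d (u n) + r n := by
  rw [egfDerivation_egf, C_mul_egf, ← map_add, egf_injective.eq_iff, funext_iff]
  refine forall_congr' fun n => ?_
  rw [Pi.add_apply, Pi.smul_apply, smul_eq_mul]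
  constructor <;> intro h <;> linear_combination h

variable {d b}

theorem eq_of_egfDerivation_eq {f g r : A⟦X⟧} {c : A}
    (hf : egfDerivation d b f = PowerSeries.C c * f + r)
    (hg : egfDerivation d b g = PowerSeries.C c * g + r)
    (h0 : PowerSeries.constantCoeff f = PowerSeries.constantCoeff g) : f = g := by
  obtain ⟨u, rfl⟩ := egf_surjective f
  obtain ⟨v, rfl⟩ := egf_surjective g
  obtain ⟨r, rfl⟩ := egf_surjective r
  rw [egfDerivation_egf_eq_iff] at hf hg
  congr 1
  ext1 n
  induction n with
  | zero => rwa [constantCoeff_egf, constantCoeff_egf] at h0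
  | succ n ih => rw [hf, hg, ih]

theorem egfDerivation_eq_of_derivative {f : A⟦X⟧} {c : A}
    (hf : egfDerivation d b (d⁄dX A f) = PowerSeries.C c * d⁄dX A f)
    (h0 : PowerSeries.constantCoeff f = 0) :
    egfDerivation d b f = PowerSeries.C (c + b) * f
      + PowerSeries.C (PowerSeries.constantCoeff (d⁄dX A f)) := by
  obtain ⟨u, rfl⟩ := egf_surjective f
  rw [derivative_egf, ← add_zero (PowerSeries.C c * _), ← map_zero egf,
    egfDerivation_egf_eq_iff] at hf
  rw [constantCoeff_egf] at h0
  rw [derivative_egf, constantCoeff_egf, ← egf_single_zero (u _), egfDerivation_egf_eq_iff]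
  intro n
  cases n with
  | zero => simp [h0]
  | succ n =>
    rw [hf n, Pi.single_eq_of_ne n.succ_ne_zero, Pi.zero_apply]
    push_cast
    ring

end EgfDerivation

section TaylorSeries

variable {𝕜 : Type*} [NontriviallyNormedField 𝕜]

theorem hasFPowerSeriesAt_ofScalars_of_hasSum {F : 𝕜 → 𝕜} {u : ℕ → 𝕜}
    (h : ∀ᶠ t in 𝓝 0, HasSum (fun n => u n * t ^ n / (n ! : 𝕜)) (F t)) :
    HasFPowerSeriesAt F (FormalMultilinearSeries.ofScalars 𝕜 fun n => u n / (n ! : 𝕜)) 0 := by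
  refine hasFPowerSeriesAt_iff.mpr (h.mono fun t ht => ?_)
  simpa [FormalMultilinearSeries.coeff_ofScalars, mul_div_right_comm, mul_comm] using ht

variable [CharZero 𝕜]

/-- The Taylor series of a function at a point, as a formal power series. -/
noncomputable def taylorSeries (F : 𝕜 → 𝕜) (x : 𝕜) : 𝕜⟦X⟧ :=
  egf fun n => iteratedDeriv n F x

theorem taylorSeries_mul {F G : 𝕜 → 𝕜} {x : 𝕜} (hF : ContDiffAt 𝕜 ∞ F x)
    (hG : ContDiffAt 𝕜 ∞ G x) :
    taylorSeries (F * G) x = taylorSeries F x * taylorSeries G x := by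
  rw [taylorSeries, taylorSeries, taylorSeries, egf_mul]
  congr 1
  ext1 n
  exact iteratedDeriv_mul (hF.of_le (mod_cast le_top)) (hG.of_le (mod_cast le_top))

theorem taylorSeries_sub {F G : 𝕜 → 𝕜} {x : 𝕜} (hF : ContDiffAt 𝕜 ∞ F x)
    (hG : ContDiffAt 𝕜 ∞ G x) :
    taylorSeries (F - G) x = taylorSeries F x - taylorSeries G x := by
  rw [taylorSeries, taylorSeries, taylorSeries, ← map_sub]
  congr 1
  ext1 n
  exact iteratedDeriv_sub (hF.of_le (mod_cast le_top)) (hG.of_le (mod_cast le_top))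

theorem taylorSeries_const (c x : 𝕜) : taylorSeries (fun _ => c) x = PowerSeries.C c := by
  ext n
  rw [taylorSeries, coeff_egf, iteratedDeriv_const, PowerSeries.coeff_C]
  split_ifs with hn <;> simp [hn]

theorem taylorSeries_congr {F G : 𝕜 → 𝕜} {x : 𝕜} (h : F =ᶠ[𝓝 x] G) :
    taylorSeries F x = taylorSeries G x := by
  simp only [taylorSeries, h.iteratedDeriv_eq]

theorem taylorSeries_exp_const_mul (c : ℝ) :
    taylorSeries (fun t => Real.exp (c * t)) 0 = egf (c ^ ·) := by
  simp [taylorSeries, iteratedDeriv_exp_const_mul]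

theorem taylorSeries_eq_egf_of_hasSum [CompleteSpace 𝕜] {F : 𝕜 → 𝕜} {u : ℕ → 𝕜}
    (h : ∀ᶠ t in 𝓝 0, HasSum (fun n => u n * t ^ n / (n ! : 𝕜)) (F t)) :
    taylorSeries F 0 = egf u := by
  have hF := hasFPowerSeriesAt_ofScalars_of_hasSum h
  have hseries := hF.analyticAt.hasFPowerSeriesAt.eq_formalMultilinearSeries hF
  rw [taylorSeries]
  congr 1
  ext1 n
  have hn := congrArg (FormalMultilinearSeries.coeff · n) hseries
  simp only [FormalMultilinearSeries.coeff_ofScalars] at hn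
  exact (div_left_inj' (by exact_mod_cast n.factorial_ne_zero)).mp hn

end TaylorSeries

section SquareRoot

theorem powerSeries_eq_of_sq_eq_sq {R : Type*} [CommRing R] [NoZeroDivisors R] {f g : R⟦X⟧}
    (hsq : f ^ 2 = g ^ 2)
    (h0 : PowerSeries.constantCoeff f ≠ -PowerSeries.constantCoeff g) : f = g :=
  (sq_eq_sq_iff_eq_or_eq_neg.mp hsq).resolve_right fun h => h0 (by rw [h, map_neg])

variable {u v : ℕ → ℝ} {c z : ℝ}

theorem eventually_sqrt_mul_sqrt_mul_eq (hz : z ≠ 1) (c : ℝ) :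
    ∀ᶠ t in 𝓝 0, √((1 - z) / (Real.exp (c * t) - z)) * √((1 - z) / (Real.exp (c * t) - z)) *
      (Real.exp (c * t) - z) = 1 - z := by
  have hz' : 1 - z ≠ 0 := sub_ne_zero.mpr hz.symm
  have hcont : ContinuousAt (fun t => (1 - z) / (Real.exp (c * t) - z)) 0 := by
    refine ContinuousAt.div (by fun_prop) (by fun_prop) ?_
    simpa using hz'
  have hpos : ∀ᶠ t in 𝓝 0, 0 < (1 - z) / (Real.exp (c * t) - z) :=
    hcont.eventually_const_lt (by simp [hz'])
  filter_upwards [hpos] with t ht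
  rw [Real.mul_self_sqrt ht.le, div_mul_cancel₀]
  exact fun h => ht.ne' (by rw [h, div_zero])

theorem egf_sq_mul_of_hasSum_sqrt (hz : z ≠ 1)
    (hu : ∀ᶠ t in 𝓝 0, HasSum (fun n => u n * t ^ n / (n ! : ℝ))
      √((1 - z) / (Real.exp (c * t) - z))) :
    egf u ^ 2 * (egf (c ^ ·) - PowerSeries.C z) = PowerSeries.C (1 - z) := by
  set F : ℝ → ℝ := fun t => √((1 - z) / (Real.exp (c * t) - z))
  have hF : ContDiffAt ℝ ∞ F 0 :=
    (hasFPowerSeriesAt_ofScalars_of_hasSum hu).analyticAt.contDiffAt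
  set e : ℝ → ℝ := fun t => Real.exp (c * t)
  have he : ContDiffAt ℝ ∞ e 0 := by fun_prop
  have hFF : ContDiffAt ℝ ∞ (F * F) 0 := hF.mul hF
  have hez : ContDiffAt ℝ ∞ (e - fun _ => z) 0 := he.sub contDiffAt_const
  have hprod : F * F * (e - fun _ => z) =ᶠ[𝓝 0] fun _ => 1 - z :=
    eventually_sqrt_mul_sqrt_mul_eq hz c
  calc egf u ^ 2 * (egf (c ^ ·) - PowerSeries.C z)
      = taylorSeries (F * F * (e - fun _ => z)) 0 := by
        rw [taylorSeries_mul hFF hez, taylorSeries_mul hF hF, taylorSeries_sub he contDiffAt_const,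
          taylorSeries_exp_const_mul, taylorSeries_const, taylorSeries_eq_egf_of_hasSum hu, pow_two]
    _ = PowerSeries.C (1 - z) := by rw [taylorSeries_congr hprod, taylorSeries_const]

theorem apply_zero_eq_one_of_hasSum_sqrt (hz : z ≠ 1)
    (hu : ∀ᶠ t in 𝓝 0, HasSum (fun n => u n * t ^ n / (n ! : ℝ))
      √((1 - z) / (Real.exp (c * t) - z))) : u 0 = 1 := by
  have h0 : HasSum (fun n => u n * 0 ^ n / (n ! : ℝ)) (u 0) := by
    simpa using hasSum_single (f := fun n => u n * 0 ^ n / (n ! : ℝ)) 0 (by simp +contextual)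
  rw [h0.unique hu.self_of_nhds]
  simp [sub_ne_zero.mpr hz.symm]

theorem eq_of_egf_sq_mul_eq_of_hasSum_sqrt (hz : z ≠ 1)
    (hu : ∀ᶠ t in 𝓝 0, HasSum (fun n => u n * t ^ n / (n ! : ℝ))
      √((1 - z) / (Real.exp (c * t) - z)))
    (hv : egf v ^ 2 * (egf (c ^ ·) - PowerSeries.C z) = PowerSeries.C (1 - z)) (hv0 : v 0 = 1) :
    v = u := by
  have hz' : PowerSeries.C (1 - z) ≠ 0 :=
    (map_ne_zero_iff _ PowerSeries.C_injective).mpr (sub_ne_zero.mpr hz.symm)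
  have hsq : egf v ^ 2 = egf u ^ 2 := mul_right_cancel₀ (right_ne_zero_of_mul (hv.trans_ne hz'))
    (hv.trans (egf_sq_mul_of_hasSum_sqrt hz hu).symm)
  refine egf_injective (powerSeries_eq_of_sq_eq_sq hsq ?_)
  rw [constantCoeff_egf, constantCoeff_egf, hv0, apply_zero_eq_one_of_hasSum_sqrt hz hu]
  norm_num

end SquareRoot

section LehmerDerivation

/-- The derivation `(1 - 2xt) ∂_t - 2x(1 - x) ∂_x` of `ℝ[x]⟦t⟧`, for which the recursions
of `lehmerQ` and `lehmerPa` become first-order linear equations. -/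
noncomputable def lehmerDerivation : Derivation ℝ ℝ[X]⟦X⟧ ℝ[X]⟦X⟧ :=
  egfDerivation (-(2 * X * (1 - X) : ℝ[X]) • derivative') (-2 * X)

theorem lehmerDerivation_egf_eq_iff {u r : ℕ → ℝ[X]} {c : ℝ[X]} :
    lehmerDerivation (egf u) = PowerSeries.C c * egf u + egf r ↔
      ∀ n, u (n + 1) =
        (c + 2 * (n : ℝ[X]) * X) * u n + 2 * X * (1 - X) * derivative (u n) + r n := by
  refine (egfDerivation_egf_eq_iff _ _).trans (forall_congr' fun n => Eq.congr_right ?_)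
  rw [Derivation.smul_apply, derivative'_apply, smul_eq_mul]
  ring

theorem lehmerDerivation_C (c : ℝ[X]) :
    lehmerDerivation (PowerSeries.C c) = PowerSeries.C (-(2 * X * (1 - X)) * derivative c) :=
  egfDerivation_C _ _ c

theorem lehmerDerivation_exp (s : ℝ) :
    lehmerDerivation (egf ((C s * (1 - X)) ^ ·)) =
      PowerSeries.C (C s * (1 - X)) * egf ((C s * (1 - X)) ^ ·) := by
  rw [← add_zero (PowerSeries.C _ * _), ← map_zero egf, lehmerDerivation_egf_eq_iff]
  intro n
  cases n with
  | zero => simp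
  | succ n =>
    rw [derivative_pow_succ, derivative_C_mul, derivative_sub, derivative_one, derivative_X,
      Pi.zero_apply, C_add, C_eq_natCast, C_1, Nat.cast_succ, pow_succ]
    ring

theorem lehmerDerivation_egf_lehmerQ : lehmerDerivation (egf lehmerQ) = egf lehmerQ := by
  have h : lehmerDerivation (egf lehmerQ) = PowerSeries.C 1 * egf lehmerQ + egf 0 := by
    rw [lehmerDerivation_egf_eq_iff]
    intro n
    rw [lehmerQ, C_mul, C_eq_natCast, C_ofNat, Pi.zero_apply]
    ring
  rwa [map_one, one_mul, map_zero, add_zero] at h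

theorem lehmerDerivation_egf_lehmerPa (a : ℝ) :
    lehmerDerivation (egf (lehmerPa a)) =
      PowerSeries.C (C (2 * a) * (1 - X)) * egf (lehmerPa a) + egf lehmerQ := by
  rw [lehmerDerivation_egf_eq_iff]
  intro n
  rw [lehmerPa, C_sub, C_mul, C_eq_natCast, C_ofNat]
  ring

theorem egf_lehmerQ_sq_mul :
    egf lehmerQ ^ 2 * (egf ((C (-2) * (1 - X)) ^ ·) - PowerSeries.C X) =
      PowerSeries.C (1 - X) := by
  set Q := egf lehmerQ
  set e := egf ((C (-2) * (1 - X : ℝ[X])) ^ ·)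
  have hQ : lehmerDerivation Q = Q := lehmerDerivation_egf_lehmerQ
  have he : lehmerDerivation e = PowerSeries.C (C (-2) * (1 - X)) * e := lehmerDerivation_exp (-2)
  have hleft : lehmerDerivation (Q ^ 2 * (e - PowerSeries.C X)) =
      PowerSeries.C (2 * X) * (Q ^ 2 * (e - PowerSeries.C X)) + 0 := by
    rw [pow_two, Derivation.leibniz, Derivation.leibniz, map_sub, lehmerDerivation_C, hQ, he]
    simp only [smul_eq_mul, derivative_X, map_mul, map_sub, map_one, map_neg, map_ofNat]
    ring
  have hright : lehmerDerivation (PowerSeries.C (1 - X)) =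
      PowerSeries.C (2 * X) * PowerSeries.C (1 - X) + 0 := by
    rw [lehmerDerivation_C]
    simp only [derivative_X, derivative_one, map_mul, map_sub, map_one, map_zero, map_neg]
    ring
  refine eq_of_egfDerivation_eq hleft hright ?_
  simp [Q, e, constantCoeff_egf, lehmerQ]

/-- The sequence with exponential generating function `∫₀ᵗ exp (2(a - 1)(1 - x)s) Q(x, s) ds`,
where `Q` is the exponential generating function of `lehmerQ`. -/
noncomputable def lehmerIntegral (a : ℝ) : ℕ → ℝ[X]
  | 0 => 0
  | n + 1 => binomialConv lehmerQ ((C (2 * (a - 1)) * (1 - X)) ^ ·) n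

theorem derivative_egf_lehmerIntegral (a : ℝ) :
    d⁄dX ℝ[X] (egf (lehmerIntegral a)) =
      egf lehmerQ * egf ((C (2 * (a - 1)) * (1 - X)) ^ ·) := by
  rw [derivative_egf, egf_mul]
  rfl

theorem lehmerDerivation_egf_lehmerIntegral (a : ℝ) :
    lehmerDerivation (egf (lehmerIntegral a)) =
      PowerSeries.C (C (2 * (a - 1)) * (1 - X) + 1 + -2 * X) * egf (lehmerIntegral a) + 1 := by
  have hD : lehmerDerivation (d⁄dX ℝ[X] (egf (lehmerIntegral a))) =
      PowerSeries.C (C (2 * (a - 1)) * (1 - X) + 1) * d⁄dX ℝ[X] (egf (lehmerIntegral a)) := by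
    rw [derivative_egf_lehmerIntegral, Derivation.leibniz, lehmerDerivation_egf_lehmerQ,
      lehmerDerivation_exp, smul_eq_mul, smul_eq_mul, map_add, map_one]
    ring
  have h0 : PowerSeries.constantCoeff (egf (lehmerIntegral a)) = 0 := constantCoeff_egf _
  have h1 : PowerSeries.constantCoeff (d⁄dX ℝ[X] (egf (lehmerIntegral a))) = 1 := by
    rw [derivative_egf_lehmerIntegral, map_mul, constantCoeff_egf, constantCoeff_egf, lehmerQ,
      pow_zero, one_mul]
  have h := egfDerivation_eq_of_derivative hD h0
  rwa [h1, map_one] at h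

theorem egf_lehmerPa (a : ℝ) :
    egf (lehmerPa a) = egf (lehmerIntegral a) * egf lehmerQ := by
  set P := egf (lehmerIntegral a) * egf lehmerQ
  have hP : lehmerDerivation P = PowerSeries.C (C (2 * a) * (1 - X)) * P + egf lehmerQ := by
    rw [Derivation.leibniz, lehmerDerivation_egf_lehmerQ, lehmerDerivation_egf_lehmerIntegral]
    simp only [P, smul_eq_mul, map_mul, map_sub, map_add, map_neg, map_one, map_ofNat]
    ring
  refine eq_of_egfDerivation_eq (lehmerDerivation_egf_lehmerPa a) hP ?_
  simp [P, constantCoeff_egf, lehmerPa, lehmerIntegral]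

theorem lehmerPa_succ_eq_sum (a : ℝ) (n : ℕ) :
    lehmerPa a (n + 1) = ∑ j ∈ Finset.range (n + 1),
      ((n + 1).choose (j + 1) : ℝ[X]) *
        (∑ l ∈ Finset.range (j + 1),
          (j.choose l : ℝ[X]) * lehmerQ l * (C (2 * (a - 1)) * (1 - X)) ^ (j - l)) *
        lehmerQ (n - j) := by
  have h : lehmerPa a = binomialConv (lehmerIntegral a) lehmerQ :=
    egf_injective ((egf_lehmerPa a).trans (egf_mul _ _))
  rw [h, binomialConv, Finset.sum_range_succ']
  simp only [lehmerIntegral, binomialConv, mul_zero, zero_mul, add_zero, Nat.add_sub_add_right]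

end LehmerDerivation

section EulerianPolynomials

theorem egf_eval_lehmerQ_sq_mul (z : ℝ) :
    egf (fun n => (lehmerQ n).eval z) ^ 2 * (egf ((2 * (z - 1)) ^ ·) - PowerSeries.C z) =
      PowerSeries.C (1 - z) := by
  have hQ : evalRingHom z ∘ lehmerQ = fun n => (lehmerQ n).eval z := rfl
  have hexp : evalRingHom z ∘ ((C (-2) * (1 - X)) ^ ·) = ((2 * (z - 1)) ^ ·) := by
    ext1 n
    simp only [Function.comp_apply, coe_evalRingHom, eval_pow, eval_mul, eval_C, eval_sub,
      eval_one, eval_X]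
    ring
  have h := congrArg (PowerSeries.map (evalRingHom z)) egf_lehmerQ_sq_mul
  rw [map_mul, map_pow, map_sub, map_egf, map_egf, PowerSeries.map_C, PowerSeries.map_C, hQ,
    hexp] at h
  simpa only [coe_evalRingHom, eval_X, eval_sub, eval_one] using h

theorem eval_lehmerQ_eq_of_hasSum_sqrt {u : ℕ → ℝ} {z : ℝ} (hz : z ≠ 1)
    (hu : ∀ᶠ t in 𝓝 0, HasSum (fun n => u n * t ^ n / (n ! : ℝ))
      √((1 - z) / (Real.exp (t * (z - 1)) - z))) (k : ℕ) :
    (lehmerQ k).eval z = 2 ^ k * u k := by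
  have htwo : Tendsto (fun t : ℝ => 2 * t) (𝓝 0) (𝓝 0) :=
    (continuous_const_mul 2).tendsto' 0 0 (mul_zero 2)
  have hscaled : ∀ᶠ t in 𝓝 0, HasSum (fun n => 2 ^ n * u n * t ^ n / (n ! : ℝ))
      √((1 - z) / (Real.exp (2 * (z - 1) * t) - z)) := by
    filter_upwards [htwo.eventually hu] with t ht
    rw [show 2 * (z - 1) * t = 2 * t * (z - 1) by ring]
    convert ht using 3 with n
    ring
  have hQ0 : (lehmerQ 0).eval z = 1 := by rw [lehmerQ, eval_one]
  exact congrFun (eq_of_egf_sq_mul_eq_of_hasSum_sqrt hz hscaled (egf_eval_lehmerQ_sq_mul z) hQ0) k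

end EulerianPolynomials

theorem pa_eq_eulerian_general (E : ℕ → ℝ → ℝ → ℝ)
    (hE : ∀ x y : ℝ, x ≠ 1 → ∃ ε > 0, ∀ t : ℝ, |t| < ε →
      HasSum (fun n : ℕ => E n x y * t ^ n / (Nat.factorial n : ℝ))
        (((1 - x) / (Real.exp (t * (x - 1)) - x)) ^ y))
    (n : ℕ) (a : ℝ) (z : ℝ) (hz : z ≠ 1) :
    (lehmerPa a (n + 1)).eval z =
      2 ^ n * ∑ j ∈ Finset.range (n + 1), ∑ l ∈ Finset.range (j + 1),
        (Nat.choose (n + 1) (j + 1) : ℝ) * (Nat.choose j l : ℝ) * (a - 1) ^ (j - l) *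
          (1 - z) ^ (j - l) * E (n - j) z (1 / 2) * E l z (1 / 2) := by
  obtain ⟨ε, hε, hsum⟩ := hE z (1 / 2) hz
  have hsqrt : ∀ᶠ t in 𝓝 0, HasSum (fun k => E k z (1 / 2) * t ^ k / (k ! : ℝ))
      √((1 - z) / (Real.exp (t * (z - 1)) - z)) := by
    filter_upwards [Metric.ball_mem_nhds 0 hε] with t ht
    rw [Real.sqrt_eq_rpow]
    exact hsum t (mem_ball_zero_iff.mp ht)
  have hQ := eval_lehmerQ_eq_of_hasSum_sqrt hz hsqrt
  simp only [lehmerPa_succ_eq_sum, eval_finsetSum, eval_mul, eval_natCast, eval_pow, eval_C,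
    eval_sub, eval_one, eval_X, hQ, Finset.mul_sum, Finset.sum_mul]
  refine Finset.sum_congr rfl fun j hj => Finset.sum_congr rfl fun l hl => ?_
  have hpow : (2 : ℝ) ^ n = 2 ^ l * 2 ^ (j - l) * 2 ^ (n - j) := by
    rw [Finset.mem_range_succ_iff] at hj hl
    rw [← pow_add, ← pow_add, Nat.add_sub_of_le hl, Nat.add_sub_of_le hj]
  rw [hpow, mul_pow, mul_pow]
  ring

/-- If `E n x y` is the family of bivariate Eulerian polynomials, characterized by the
exponential generating function `∑_{n≥0} E_n(x,y) tⁿ/n! = ((1-x)/(e^{t(x-1)} - x))^y`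
(for `t` near `0`), then for every integer `n ≥ 0`, every real `a` not of the form `(1-j)/2`
with `j` a nonnegative integer, and every real `z` with `|z| < 1`:
`p_n(a,z) = 2ⁿ ∑_{j=0}^n ∑_{l=0}^j C(n+1,j+1) C(j,l) (a-1)^{j-l} (1-z)^{j-l}
  E_{n-j}(z,1/2) E_l(z,1/2)`. -/
theorem pa_eq_eulerian (E : ℕ → ℝ → ℝ → ℝ)
    (hE : ∀ x y : ℝ, x ≠ 1 → ∃ ε > 0, ∀ t : ℝ, |t| < ε →
      HasSum (fun n : ℕ => E n x y * t ^ n / (Nat.factorial n : ℝ))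
        (((1 - x) / (Real.exp (t * (x - 1)) - x)) ^ y))
    (n : ℕ) (a : ℝ) (ha : ∀ j : ℕ, a ≠ (1 - (j : ℝ)) / 2) (z : ℝ) (hz : |z| < 1) :
    (lehmerPa a (n + 1)).eval z =
      2 ^ n * ∑ j ∈ Finset.range (n + 1), ∑ l ∈ Finset.range (j + 1),
        (Nat.choose (n + 1) (j + 1) : ℝ) * (Nat.choose j l : ℝ) * (a - 1) ^ (j - l) *
          (1 - z) ^ (j - l) * E (n - j) z (1 / 2) * E l z (1 / 2) :=
  pa_eq_eulerian_general E hE n a z (abs_lt.mp hz).2.ne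
end

section
/- For every real number a, the sequence α_n(a) := (2/3)^n · p_n(a,1/4) satisfies α_0(a) = 1 and, for every integer n ≥ 1, the recursion 3·α_n(a) = 2·α_{n-1}(a) + Σ_{l=0}^{n-1} C(n,l)·α_l(a) + 3·a^n. -/
open Polynomial

/-- The sequence `α_n(a) := (2/3)^n p_n(a,1/4)`. -/
noncomputable def alphaSeq (a : ℝ) (n : ℕ) : ℝ :=
  (2 / 3 : ℝ) ^ n * (lehmerPa a (n + 1)).eval (1 / 4)

/-!
Let `Q = ∑ qₙ₋₁ tⁿ/n!`, `P = ∑ pₙ₋₁ tⁿ/n!` and `u = 2(1-x)`. With `Δ = 2x t∂ₜ + 2x(1-x)∂ₓ`, Lehmer's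
recursions read `(∂ₜ - Δ)Q = Q` and `(∂ₜ - Δ)P = auP + Q`. Since `Δ` annihilates `e^{ut}`, the
operator `E = (1 - x e^{ut})∂ₜ - (1-x)` satisfies `(∂ₜ - Δ - 2x)E = E(∂ₜ - Δ)`. Applying `E` to the
recursions therefore gives first-order equations for `EQ` and `EP`, whose solutions are `EQ = 0` and
`EP = (1-x) e^{aut}`. The coefficients of the latter at `x = 1/4`, where `u = 3/2`, yield the
recursion for `αₙ(a)`.
-/

open Finset.HasAntidiagonal (antidiagonal mem_antidiagonal)

section BinomialTransform

variable {A B : Type*} [CommSemiring A] [CommSemiring B]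

/-- The binomial transform of weight `u`, `(fₙ) ↦ (∑ i + j = n, C(n,i) uʲ fᵢ)`: multiplication of
exponential generating functions by `e^{ut}`. -/
def binomialTransform (u : A) : (ℕ → A) →ₗ[A] (ℕ → A) where
  toFun f n := ∑ ij ∈ antidiagonal n, (n.choose ij.1 : A) * (u ^ ij.2 * f ij.1)
  map_add' f g := by
    ext n
    simp only [Pi.add_apply, mul_add, Finset.sum_add_distrib]
  map_smul' c f := by
    ext n
    simp only [Pi.smul_apply, smul_eq_mul, RingHom.id_apply, Finset.mul_sum]
    exact Finset.sum_congr rfl fun _ _ => by ring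

lemma binomialTransform_apply (u : A) (f : ℕ → A) (n : ℕ) :
    binomialTransform u f n =
      ∑ ij ∈ antidiagonal n, (n.choose ij.1 : A) * (u ^ ij.2 * f ij.1) :=
  rfl

lemma binomialTransform_zero (u : A) (f : ℕ → A) : binomialTransform u f 0 = f 0 := by
  simp [binomialTransform_apply]

lemma binomialTransform_succ (u : A) (f : ℕ → A) (n : ℕ) :
    binomialTransform u f (n + 1) =
      u * binomialTransform u f n + binomialTransform u (fun l => f (l + 1)) n := by
  simp only [binomialTransform_apply]
  rw [Finset.sum_antidiagonal_choose_succ_mul (fun i j => u ^ j * f i) n, Finset.mul_sum]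
  congr 1
  · exact Finset.sum_congr rfl fun _ _ => by ring
  · refine Finset.sum_congr rfl fun ij hij => ?_
    rw [Nat.choose_symm_of_eq_add (mem_antidiagonal.mp hij).symm]

lemma binomialTransform_one_apply (f : ℕ → A) (n : ℕ) :
    binomialTransform 1 f n = ∑ l ∈ Finset.range (n + 1), (n.choose l : A) * f l := by
  simp only [binomialTransform_apply, one_pow, one_mul]
  exact Finset.Nat.sum_antidiagonal_eq_sum_range_succ_mk _ n

lemma pow_mul_binomialTransform (c u : A) (f : ℕ → A) (n : ℕ) :
    c ^ n * binomialTransform u f n = binomialTransform (c * u) (fun l => c ^ l * f l) n := by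
  simp only [binomialTransform_apply, Finset.mul_sum]
  refine Finset.sum_congr rfl fun ij hij => ?_
  rw [← mem_antidiagonal.mp hij]
  ring

lemma map_binomialTransform (φ : A →+* B) (u : A) (f : ℕ → A) (n : ℕ) :
    φ (binomialTransform u f n) = binomialTransform (φ u) (fun l => φ (f l)) n := by
  simp only [binomialTransform_apply, map_sum, map_mul, map_pow, map_natCast]

end BinomialTransform

section WeightedDerivation

variable {R : Type*} [CommRing R]

/-- The operator `f ↦ 2nxf + 2x(1-x)f'`, which is the action of `Δ = 2x t∂ₜ + 2x(1-x)∂ₓ` on the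
coefficient of `tⁿ/n!`. -/
noncomputable def weightedDerivation (n : ℕ) : R[X] →ₗ[R] R[X] :=
  LinearMap.mulLeft R (2 * (n : R[X]) * X) + LinearMap.mulLeft R (2 * X * (1 - X)) ∘ₗ derivative

lemma weightedDerivation_apply (n : ℕ) (f : R[X]) :
    weightedDerivation n f = 2 * (n : R[X]) * X * f + 2 * X * (1 - X) * derivative f :=
  rfl

lemma weightedDerivation_mul (m n : ℕ) (f g : R[X]) :
    weightedDerivation (m + n) (f * g) =
      weightedDerivation m f * g + f * weightedDerivation n g := by
  simp only [weightedDerivation_apply, derivative_mul, Nat.cast_add]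
  ring

lemma weightedDerivation_natCast_mul (n k : ℕ) (f : R[X]) :
    weightedDerivation n ((k : R[X]) * f) = k * weightedDerivation n f := by
  simp only [← nsmul_eq_mul, map_nsmul]

lemma weightedDerivation_X_mul (n : ℕ) (f : R[X]) :
    weightedDerivation n (X * f) = X * (2 * (1 - X) * f + weightedDerivation n f) := by
  simp only [weightedDerivation_apply, derivative_mul, derivative_X]
  ring

lemma weightedDerivation_one_sub_X_mul (n : ℕ) (f : R[X]) :
    weightedDerivation (n + 1) ((1 - X) * f) = (1 - X) * weightedDerivation n f := by
  simp only [weightedDerivation_apply, derivative_mul, derivative_sub, derivative_X,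
    derivative_one, Nat.cast_add, Nat.cast_one]
  ring

lemma weightedDerivation_pow {f : R[X]} (hf : weightedDerivation 1 f = 0) (n : ℕ) :
    weightedDerivation n (f ^ n) = 0 := by
  induction n with
  | zero => simp [weightedDerivation_apply]
  | succ n ih => rw [pow_succ, weightedDerivation_mul, ih, hf, zero_mul, mul_zero, add_zero]

lemma weightedDerivation_binomialTransform {u : R[X]} (hu : weightedDerivation 1 u = 0) (k n : ℕ)
    (f : ℕ → R[X]) :
    weightedDerivation (n + k) (binomialTransform u f n) =
      binomialTransform u (fun l => weightedDerivation (l + k) (f l)) n := by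
  simp only [binomialTransform_apply, map_sum, weightedDerivation_natCast_mul]
  refine Finset.sum_congr rfl fun ij hij => ?_
  have hweight : n + k = ij.2 + (ij.1 + k) := by
    rw [← mem_antidiagonal.mp hij]
    ring
  rw [hweight, weightedDerivation_mul, weightedDerivation_pow hu, zero_mul, zero_add]

lemma weightedDerivation_one_two_mul_one_sub_X :
    weightedDerivation 1 (2 * (1 - X) : R[X]) = 0 := by
  simp only [weightedDerivation_apply, derivative_mul, derivative_ofNat, derivative_sub,
    derivative_X, derivative_one, Nat.cast_one]
  ring

/-- The operator `E = (1 - x e^{ut})∂ₜ - (1-x)`, with `u = 2(1-x)`, acting on the coefficients of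
exponential generating functions; `LinearMap.funLeft _ _ Nat.succ` is the shift `∂ₜ`. -/
noncomputable def egfOperator : (ℕ → R[X]) →ₗ[R[X]] (ℕ → R[X]) :=
  LinearMap.funLeft R[X] R[X] Nat.succ
    - (X : R[X]) • binomialTransform (2 * (1 - X)) ∘ₗ LinearMap.funLeft R[X] R[X] Nat.succ
    - (1 - X : R[X]) • LinearMap.id

lemma egfOperator_apply (f : ℕ → R[X]) (n : ℕ) :
    egfOperator f n =
      f (n + 1) - X * binomialTransform (2 * (1 - X)) (fun l => f (l + 1)) n - (1 - X) * f n :=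
  rfl

-- The relation `∂ₜE = (Δ + 2x)E + E(∂ₜ - Δ)`; the summand `2x` raises the index of
-- `weightedDerivation` from `n` to `n + 1`.
lemma egfOperator_succ (f : ℕ → R[X]) (n : ℕ) :
    egfOperator f (n + 1) =
      weightedDerivation (n + 1) (egfOperator f n) +
        egfOperator (fun l => f (l + 1) - weightedDerivation l (f l)) n := by
  have hsub : binomialTransform (2 * (1 - X))
      (fun l => f (l + 1 + 1) - weightedDerivation (l + 1) (f (l + 1))) n =
        binomialTransform (2 * (1 - X)) (fun l => f (l + 1 + 1)) n -
          weightedDerivation (n + 1) (binomialTransform (2 * (1 - X)) (fun l => f (l + 1)) n) := by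
    rw [weightedDerivation_binomialTransform weightedDerivation_one_two_mul_one_sub_X]
    exact congrFun (map_sub (binomialTransform (2 * (1 - X))) (fun l => f (l + 1 + 1))
      fun l => weightedDerivation (l + 1) (f (l + 1))) n
  simp only [egfOperator_apply, map_sub, weightedDerivation_X_mul,
    weightedDerivation_one_sub_X_mul, binomialTransform_succ, hsub]
  ring

end WeightedDerivation

lemma lehmerQ_succ_sub_weightedDerivation (n : ℕ) :
    lehmerQ (n + 1) - weightedDerivation n (lehmerQ n) = lehmerQ n := by
  simp only [lehmerQ, weightedDerivation_apply, C_mul, C_ofNat, map_natCast]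
  ring

lemma lehmerPa_succ_sub_weightedDerivation (a : ℝ) (n : ℕ) :
    lehmerPa a (n + 1) - weightedDerivation n (lehmerPa a n) =
      C a * (2 * (1 - X)) * lehmerPa a n + lehmerQ n := by
  simp only [lehmerPa, weightedDerivation_apply, C_sub, C_ofNat, map_natCast]
  ring

lemma egfOperator_lehmerQ : egfOperator lehmerQ = 0 := by
  ext1 n
  induction n with
  | zero => simp [egfOperator_apply, binomialTransform_zero, lehmerQ]
  | succ n ih =>
    simp only [egfOperator_succ, lehmerQ_succ_sub_weightedDerivation, ih, Pi.zero_apply, map_zero,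
      add_zero]

lemma egfOperator_lehmerPa (a : ℝ) (n : ℕ) :
    egfOperator (lehmerPa a) n = (1 - X) * (C a * (2 * (1 - X))) ^ n := by
  induction n with
  | zero => simp [egfOperator_apply, binomialTransform_zero, lehmerPa, lehmerQ]
  | succ n ih =>
    have hsource : (fun l => lehmerPa a (l + 1) - weightedDerivation l (lehmerPa a l)) =
        (C a * (2 * (1 - X))) • lehmerPa a + lehmerQ :=
      funext (lehmerPa_succ_sub_weightedDerivation a)
    have hannihilated : weightedDerivation 1 (C a * (2 * (1 - X))) = 0 := by
      rw [← smul_eq_C_mul, map_smul, weightedDerivation_one_two_mul_one_sub_X, smul_zero]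
    rw [egfOperator_succ, hsource, map_add, map_smul, egfOperator_lehmerQ, add_zero, Pi.smul_apply,
      smul_eq_mul, ih, weightedDerivation_one_sub_X_mul, weightedDerivation_pow hannihilated]
    ring

lemma pow_mul_eval_lehmerPa_succ (a : ℝ) {c x : ℝ} (hc : c * (2 * (1 - x)) = 1) (n : ℕ) :
    c ^ n * (lehmerPa a (n + 1)).eval x =
      x * ∑ l ∈ Finset.range (n + 1), (n.choose l : ℝ) * (c ^ l * (lehmerPa a (l + 1)).eval x) +
        (1 - x) * (c ^ n * (lehmerPa a n).eval x) + (1 - x) * a ^ n := by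
  have hsum : c ^ n *
      (binomialTransform (2 * (1 - X)) (fun l => lehmerPa a (l + 1)) n).eval x =
        ∑ l ∈ Finset.range (n + 1), (n.choose l : ℝ) * (c ^ l * (lehmerPa a (l + 1)).eval x) := by
    rw [← coe_evalRingHom, map_binomialTransform, pow_mul_binomialTransform]
    simp [hc, binomialTransform_one_apply]
  have hpow : c ^ n * (a * (2 * (1 - x))) ^ n = a ^ n := by
    rw [← mul_pow, mul_left_comm, hc, mul_one]
  have heval := congrArg (eval x) (egfOperator_lehmerPa a n)
  simp only [egfOperator_apply, eval_sub, eval_mul, eval_pow, eval_X, eval_one, eval_C,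
    eval_ofNat] at heval
  linear_combination c ^ n * heval + x * hsum + (1 - x) * hpow

/-- For every real `a`, the sequence `α_n(a) = (2/3)^n p_n(a,1/4)` satisfies `α_0(a) = 1` and,
for every `n ≥ 1`, `3 α_n(a) = 2 α_{n-1}(a) + ∑_{l=0}^{n-1} C(n,l) α_l(a) + 3 aⁿ`. -/
theorem alphaSeq_recursion (a : ℝ) :
    alphaSeq a 0 = 1 ∧
    ∀ n : ℕ, 1 ≤ n →
      3 * alphaSeq a n =
        2 * alphaSeq a (n - 1) +
          ∑ l ∈ Finset.range n, (Nat.choose n l : ℝ) * alphaSeq a l + 3 * a ^ n := by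
  refine ⟨by simp [alphaSeq, lehmerPa, lehmerQ], fun n hn => ?_⟩
  obtain ⟨m, rfl⟩ := Nat.exists_eq_add_of_le' hn
  have hα (l : ℕ) : (2 / 3) ^ l * (lehmerPa a (l + 1)).eval (1 / 4) = alphaSeq a l := rfl
  have hprev : (2 / 3) ^ (m + 1) * (lehmerPa a (m + 1)).eval (1 / 4) = 2 / 3 * alphaSeq a m := by
    rw [pow_succ', mul_assoc, hα]
  have hrec := pow_mul_eval_lehmerPa_succ a (c := 2 / 3) (x := 1 / 4) (by norm_num) (m + 1)
  simp only [hα, hprev, Finset.sum_range_succ _ (m + 1), Nat.choose_self, Nat.cast_one] at hrec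
  rw [Nat.add_sub_cancel]
  linear_combination 4 * hrec
end

section
/- For every integer k ≥ 0 and every integer m ≥ 1, there exist rational numbers q₁ and q₂ such that ζ_HCB(1-k, m+1/2) = (q₁ + q₂·√3)·π. -/
/-- The Hurwitz type central binomial series
`ζ_HCB(s,a) = ∑_{n≥0} 1 / ( C(2(n+a), n+a) (n+a)^s )`. -/
noncomputable def zetaHCB (s : ℤ) (a : ℝ) : ℝ :=
  ∑' n : ℕ, 1 / (genBinom (2 * ((n : ℝ) + a)) ((n : ℝ) + a) * ((n : ℝ) + a) ^ s)

/-!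
At half-integers the reciprocal generalized central binomial coefficients are, up to the factor
`π/2`, ordinary central binomial coefficients: `1 / C(2a, a) = π/2 · a · C(2n, n) / 16ⁿ` for
`a = n + 1/2`. So `ζ_HCB(1-k, 1/2)` is `π/2` times the series `∑ (n + 1/2)ᵏ C(2n, n) / 16ⁿ`, and
passing from `1/2` to `m + 1/2` only removes finitely many rational multiples of `π`.

By Newton's binomial series, for `|x| < 1/4` the sum of `n(n-1)⋯(n-j+1) C(2n, n) xⁿ` over `n` is a
rational multiple of `(x / (1 - 4x))ʲ / √(1 - 4x)`. Since multiplying by `n` sends a falling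
factorial to a rational combination of falling factorials, for rational `x` every polynomial weight
with rational coefficients gives a rational multiple of `1 / √(1 - 4x)`, which at `x = 1/16`
is `2/3 · √3`.
-/

open Polynomial
open scoped Nat

lemma descFactorial_mul_centralBinom_add {K : Type*} [Field K] [CharZero K] (i j : ℕ) :
    ((i + j).descFactorial j * (i + j).centralBinom : K) =
      j ! * j.centralBinom * ((-4) ^ i * Ring.choose (-1 / 2 - j : K) i) := by
  induction i with
  | zero => simp [Nat.descFactorial_self]
  | succ i ih =>
    have descFactorial_succ : (i + 1 : K) * (i + j + 1).descFactorial j =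
        (i + j + 1) * (i + j).descFactorial j := by
      have h := Nat.succ_descFactorial (i + j) j
      rw [show i + j + 1 - j = i + 1 by omega] at h
      exact_mod_cast h
    have centralBinom_succ : (i + j + 1 : K) * (i + j + 1).centralBinom =
        2 * (2 * (i + j) + 1) * (i + j).centralBinom :=
      mod_cast Nat.succ_mul_centralBinom_succ (i + j)
    have choose_succ : (i + 1 : K) * Ring.choose (-1 / 2 - j : K) (i + 1) =
        Ring.choose (-1 / 2 - j : K) i * (-1 / 2 - j - i) := by
      simpa using Ring.choose_smul_choose (-1 / 2 - j : K) i.le_succ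
    apply mul_left_cancel₀ (Nat.cast_add_one_ne_zero (R := K) i)
    rw [add_right_comm]
    linear_combination (i + j + 1).centralBinom * descFactorial_succ +
      (i + j).descFactorial j * centralBinom_succ + 2 * (2 * (i + j) + 1) * ih -
      j ! * j.centralBinom * (-4) ^ (i + 1) * choose_succ

lemma hasSum_ringChoose_mul_pow (a : ℝ) {y : ℝ} (hy : |y| < 1) :
    HasSum (fun n : ℕ ↦ Ring.choose a n * y ^ n) ((1 + y) ^ a) := by
  have h := (Real.one_add_rpow_hasFPowerSeriesOnBall_zero (a := a)).hasSum (y := y)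
    (by simpa [enorm_eq_nnnorm, ← NNReal.coe_lt_coe] using hy)
  simpa [binomialSeries, FormalMultilinearSeries.coeff_ofScalars, mul_comm] using h

lemma hasSum_descFactorial_mul_centralBinom_mul_pow (j : ℕ) {x : ℝ} (hx : |x| < 1 / 4) :
    HasSum (fun n : ℕ ↦ (n.descFactorial j * (n.centralBinom * x ^ n) : ℝ))
      (j ! * j.centralBinom * (x / (1 - 4 * x)) ^ j / √(1 - 4 * x)) := by
  have pos : 0 < 1 - 4 * x := by linarith [(abs_lt.1 hx).2]
  have sum_lt : ∑ n ∈ Finset.range j, (n.descFactorial j * (n.centralBinom * x ^ n) : ℝ) = 0 :=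
    Finset.sum_eq_zero fun n hn ↦ by
      simp [Nat.descFactorial_of_lt (Finset.mem_range.1 hn)]
  have value : (1 + -4 * x) ^ (-1 / 2 - j : ℝ) = ((1 - 4 * x) ^ j)⁻¹ * (√(1 - 4 * x))⁻¹ := by
    rw [show 1 + -4 * x = 1 - 4 * x by ring, show (-1 / 2 - j : ℝ) = -j + -(1 / 2) by ring,
      Real.rpow_add pos, Real.rpow_neg pos.le, Real.rpow_neg pos.le, Real.rpow_natCast,
      Real.sqrt_eq_rpow]
  have newton := hasSum_ringChoose_mul_pow (-1 / 2 - j) (y := -4 * x)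
    (by rw [abs_mul, abs_neg, abs_of_pos four_pos]; linarith)
  rw [← hasSum_nat_add_iff' j, sum_lt, sub_zero]
  convert! newton.mul_left (j ! * j.centralBinom * x ^ j) using 1
  · ext i
    linear_combination x ^ (i + j) * descFactorial_mul_centralBinom_add (K := ℝ) i j
  · rw [value, div_pow]
    ring

lemma exists_rat_hasSum_aeval_mul_descFactorial_mul_centralBinom (P : ℚ[X]) (j : ℕ) {x : ℚ}
    (hx : |x| < 1 / 4) :
    ∃ q : ℚ, HasSum
      (fun n : ℕ ↦ aeval (n : ℝ) P * (n.descFactorial j * (n.centralBinom * (x : ℝ) ^ n)))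
      (q / √(1 - 4 * x)) := by
  induction P using Polynomial.induction_on generalizing j with
  | C a =>
    have hx' : |(x : ℝ)| < 1 / 4 := by simpa using (Rat.cast_lt (K := ℝ)).2 hx
    refine ⟨a * (j ! * j.centralBinom * (x / (1 - 4 * x)) ^ j), ?_⟩
    convert! (hasSum_descFactorial_mul_centralBinom_mul_pow j hx').mul_left (a : ℝ) using 1
    · simp
    · push_cast
      ring
  | add P Q hP hQ =>
    obtain ⟨p, hp⟩ := hP j
    obtain ⟨q, hq⟩ := hQ j
    refine ⟨p + q, ?_⟩
    convert! hp.add hq using 1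
    · simp only [map_add, add_mul]
    · push_cast
      ring
  | monomial d a ih =>
    obtain ⟨p, hp⟩ := ih (j + 1)
    obtain ⟨q, hq⟩ := ih j
    refine ⟨p + j * q, ?_⟩
    convert! hp.add (hq.mul_left (j : ℝ)) using 1
    · ext n
      have mul_descFactorial : (n : ℝ) * n.descFactorial j =
          n.descFactorial (j + 1) + j * n.descFactorial j := by
        rw [← descPochhammer_eval_eq_descFactorial, ← descPochhammer_eval_eq_descFactorial,
          descPochhammer_succ_eval]
        ring
      simp only [map_mul, map_pow, aeval_X, pow_succ]
      linear_combination aeval (n : ℝ) (C a) * n ^ d * (n.centralBinom * (x : ℝ) ^ n) *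
        mul_descFactorial
    · push_cast
      ring

theorem exists_rat_hasSum_aeval_mul_centralBinom_mul_pow (P : ℚ[X]) {x : ℚ} (hx : |x| < 1 / 4) :
    ∃ q : ℚ, HasSum (fun n : ℕ ↦ aeval (n : ℝ) P * (n.centralBinom * (x : ℝ) ^ n))
      (q / √(1 - 4 * x)) := by
  simpa using exists_rat_hasSum_aeval_mul_descFactorial_mul_centralBinom P 0 hx

/-- The summand `1 / (C(2b, b) bˢ)` of the Hurwitz type central binomial series, as a function of
`b = n + a`. -/
noncomputable def zetaHCBTerm (s : ℤ) (b : ℝ) : ℝ :=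
  1 / (genBinom (2 * b) b * b ^ s)

lemma zetaHCB_nat_add_of_hasSum {s : ℤ} {a S : ℝ}
    (h : HasSum (fun n : ℕ ↦ zetaHCBTerm s (n + a)) S) (m : ℕ) :
    zetaHCB s (m + a) = S - ∑ n ∈ Finset.range m, zetaHCBTerm s (n + a) := by
  rw [← ((hasSum_nat_add_iff' m).2 h).tsum_eq]
  simp only [zetaHCB, zetaHCBTerm, Nat.cast_add, add_assoc]

lemma genBinom_two_mul_add_one {a : ℝ} (h₁ : a + 1 ≠ 0) (h₂ : 2 * a + 1 ≠ 0) :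
    genBinom (2 * (a + 1)) (a + 1) = 2 * (2 * a + 1) / (a + 1) * genBinom (2 * a) a := by
  have Gamma_num : Real.Gamma (2 * (a + 1) + 1) =
      2 * (a + 1) * ((2 * a + 1) * Real.Gamma (2 * a + 1)) := by
    rw [Real.Gamma_add_one (by simpa using h₁), show 2 * (a + 1) = 2 * a + 1 + 1 by ring,
      Real.Gamma_add_one h₂]
  rw [genBinom, genBinom, Gamma_num, Real.Gamma_add_one h₁,
    show 2 * (a + 1) - (a + 1) + 1 = a + 1 + 1 by ring, Real.Gamma_add_one h₁,
    show 2 * a - a + 1 = a + 1 by ring]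
  field_simp

lemma genBinom_one_half : genBinom (2 * (1 / 2)) (1 / 2) = 4 / Real.pi := by
  have Gamma_three_half : Real.Gamma (1 / 2 + 1) = √Real.pi / 2 := by
    rw [Real.Gamma_add_one (by norm_num), Real.Gamma_one_half_eq]
    ring
  rw [genBinom, show (2 * (1 / 2) - 1 / 2 + 1 : ℝ) = 1 / 2 + 1 by norm_num, Gamma_three_half,
    div_mul_div_comm, Real.mul_self_sqrt Real.pi_pos.le]
  norm_num [Real.Gamma_two]

lemma inv_genBinom_nat_add_half (n : ℕ) :
    (genBinom (2 * (n + 1 / 2)) (n + 1 / 2))⁻¹ =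
      Real.pi / 2 * (n + 1 / 2) * (n.centralBinom * (1 / 16) ^ n) := by
  induction n with
  | zero =>
    rw [Nat.cast_zero, zero_add, genBinom_one_half, inv_div, Nat.centralBinom_zero, pow_zero]
    ring
  | succ n ih =>
    have genBinom_succ := genBinom_two_mul_add_one (a := n + 1 / 2)
      (by positivity) (by positivity)
    have centralBinom_succ : (n + 1 : ℝ) * (n + 1).centralBinom =
        2 * (2 * n + 1) * n.centralBinom := mod_cast Nat.succ_mul_centralBinom_succ n
    rw [Nat.cast_succ, add_right_comm, genBinom_succ, mul_inv, ih, inv_div, pow_succ]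
    field_simp
    linear_combination -8 * centralBinom_succ

lemma zetaHCBTerm_one_sub_nat_add_half (k n : ℕ) :
    zetaHCBTerm (1 - k) (n + 1 / 2) =
      Real.pi / 2 * ((n + 1 / 2) ^ k * (n.centralBinom * (1 / 16) ^ n)) := by
  have ne_zero : (n + 1 / 2 : ℝ) ≠ 0 := by positivity
  rw [zetaHCBTerm, one_div, mul_inv, inv_genBinom_nat_add_half, zpow_sub₀ ne_zero, zpow_one,
    zpow_natCast, inv_div]
  field_simp

lemma exists_rat_hasSum_zetaHCBTerm_one_sub_nat_add_half (k : ℕ) :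
    ∃ q : ℚ, HasSum (fun n : ℕ ↦ zetaHCBTerm (1 - k) (n + 1 / 2)) (q * √3 * Real.pi) := by
  obtain ⟨q, hq⟩ := exists_rat_hasSum_aeval_mul_centralBinom_mul_pow ((X + C (1 / 2)) ^ k)
    (x := 1 / 16) (by norm_num [abs_of_pos])
  have sqrt_three_quarters : √(1 - 4 * (1 / 16)) = √3 / 2 := by
    rw [show (1 - 4 * (1 / 16) : ℝ) = 3 / 2 ^ 2 by norm_num, Real.sqrt_div (by norm_num),
      Real.sqrt_sq (by norm_num)]
  refine ⟨q / 3, ?_⟩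
  convert! hq.mul_left (Real.pi / 2) using 1
  · ext n
    rw [zetaHCBTerm_one_sub_nat_add_half]
    simp
  · push_cast
    rw [sqrt_three_quarters]
    field_simp
    norm_num

/-- For every integer `k ≥ 0` and every integer `m ≥ 1`, there exist rationals `q₁, q₂` with
`ζ_HCB(1-k, m+1/2) = (q₁ + q₂ √3) π`. -/
theorem zetaHCB_half_integer (k : ℕ) (m : ℕ) (hm : 1 ≤ m) :
    ∃ q₁ q₂ : ℚ,
      zetaHCB (1 - k) ((m : ℝ) + 1 / 2) = ((q₁ : ℝ) + (q₂ : ℝ) * Real.sqrt 3) * Real.pi := by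
  obtain ⟨q, hq⟩ := exists_rat_hasSum_zetaHCBTerm_one_sub_nat_add_half k
  refine ⟨-(1 / 2 * ∑ n ∈ Finset.range m, (n + 1 / 2) ^ k * (n.centralBinom * (1 / 16) ^ n : ℚ)),
    q, ?_⟩
  rw [zetaHCB_nat_add_of_hasSum hq]
  simp only [zetaHCBTerm_one_sub_nat_add_half, ← Finset.mul_sum]
  push_cast
  ring
end
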